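/- Fix an integer d ≥ 2 and δ ∈ (0,1). Let a^{jk} : ℝ² → ℝ (1 ≤ j,k ≤ d) be smooth functions of (t,x¹) only, with a^{jk} = a^{kj} and δ|θ|² ≤ Σ_{j,k=1}^d a^{jk}(t,x¹) θ^j θ^k ≤ δ⁻¹|θ|² for all (t,x¹) and θ ∈ ℝ^d. Let u : ℝ^{d+1} → ℝ be smooth with compact support, let λ ≥ 0, and set f = u_t + Σ_{j,k=1}^d a^{jk} u_{x^j x^k} − λu. Then there is a constant N = N(δ) such that for every ξ ∈ ℝ^{d-1} with |ξ|² + λ > 0, (|ξ|² + λ) (∫_{ℝ²} |ũ(t,x¹,ξ)|² dx¹ dt)^{1/2} ≤ N (∫_{ℝ²} |f̃(t,x¹,ξ)|² dx¹ dt)^{1/2}. -/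

import Mathlib

open MeasureTheory

/-- Partial derivative in `t` of a function on `ℝ^{d+1} = ℝ × (Fin d → ℝ)`. -/
noncomputable def pdt {d : ℕ} (u : ℝ × (Fin d → ℝ) → ℝ) : ℝ × (Fin d → ℝ) → ℝ :=
  fun p => fderiv ℝ u p (1, 0)

/-- Partial derivative in `x^j`. -/
noncomputable def pdx {d : ℕ} (j : Fin d) (u : ℝ × (Fin d → ℝ) → ℝ) :
    ℝ × (Fin d → ℝ) → ℝ :=
  fun p => fderiv ℝ u p (0, Pi.single j 1)

/-- Second partial derivative in `x^j, x^k`. -/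
noncomputable def pdxx {d : ℕ} (j k : Fin d) (u : ℝ × (Fin d → ℝ) → ℝ) :
    ℝ × (Fin d → ℝ) → ℝ :=
  pdx j (pdx k u)

/-- Partial Fourier transform in the variables `x' ∈ ℝ^{d-1}` (here the spatial
dimension is `d = n+1`, `x¹` is the 0-th spatial coordinate and `x'` the rest):
`ṽ(t,x¹,ξ) = ∫_{ℝ^n} v(t,x¹,x') e^{−i ξ·x'} dx'`. -/
noncomputable def pFourier {n : ℕ} (v : ℝ × (Fin (n + 1) → ℝ) → ℝ)
    (t y : ℝ) (ξ : Fin n → ℝ) : ℂ :=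
  ∫ x' : Fin n → ℝ,
    (v (t, Fin.cons y x') : ℂ) * Complex.exp (-Complex.I * ((∑ j, ξ j * x' j : ℝ) : ℂ))




lemma scal_aux {δ r x φ : ℝ} (hδ : 0 < δ) (hδ1 : δ < 1) (hr : r = δ ^ 3 / 32) (hx0 : 0 ≤ x)
    (hφ0 : 0 ≤ φ) (h7 : δ * x ^ 2 - φ * x ≤ 2 * r * (2 * (δ⁻¹ * x + φ)) ^ 2) :
    x ≤ 3 / δ * φ := by
  by_contra hcon
  push Not at hcon
  have k0 : 3 * φ < δ * x := by
    have : 3 / δ * φ = 3 * φ / δ := by ring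
    rw [this, div_lt_iff₀ hδ] at hcon; linarith
  have k1 : 2 * r * (2 * (δ⁻¹ * x + φ)) ^ 2 = δ / 4 * (x + δ * φ) ^ 2 := by
    rw [hr]; field_simp; ring
  rw [k1] at h7
  have k8 : 0 < x := by
    rcases hx0.lt_or_eq with h | h
    · exact h
    · rw [← h] at k0; linarith
  have k5 : δ * x ≤ x := by nlinarith
  have k9 : φ ≤ x := by linarith
  have k2 : δ * φ ≤ φ := by nlinarith
  have k3 : (x + δ * φ) ^ 2 ≤ x ^ 2 + 3 * φ * x := by
    have : (x + δ * φ) ^ 2 ≤ (x + φ) ^ 2 := by gcongr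
    have : φ * φ ≤ φ * x := by gcongr
    linarith [sq (x + φ), sq x]
  have k4 : δ * (x + δ * φ) ^ 2 ≤ δ * (x ^ 2 + 3 * φ * x) := by gcongr
  have k6 : δ * (φ * x) ≤ 1 * (φ * x) := by gcongr
  have k7 : 3 * φ * x < δ * x * x := by gcongr
  have k10 : 0 < δ * x * x := by positivity
  linarith

lemma hilb_aux {E : Type*} [NormedAddCommGroup E] [InnerProductSpace ℝ E]
    {δ r h ε μ : ℝ} (hδ : 0 < δ) (hδ1 : δ < 1) (hr : r = δ ^ 3 / 32) (hε : 0 < ε)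
    (hh : h = r * ε ^ 2) (hμ : 0 ≤ μ) (hhμ : h * μ ≤ 1)
    (g G Y F Sg SG TG X : E)
    (hX : X = (ε ^ 2)⁻¹ • (SG + TG - (2 : ℝ) • G))
    (heq : g = G + h • (Y - μ • G + F))
    (hY1 : δ * ‖X‖ ^ 2 ≤ inner ℝ Y X) (hY2 : ‖Y‖ ≤ δ⁻¹ * ‖X‖)
    (hG : ‖G‖ ≤ ‖g‖)
    (hSG : ‖SG‖ = ‖G‖) (hTG : ‖TG‖ = ‖G‖)
    (hT : inner ℝ (g - G) TG = inner ℝ (Sg - SG) G)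
    (hS : inner ℝ (Sg - SG) SG = inner ℝ (g - G) G)
    (hc : ‖SG - G‖ ≤ ‖Sg - g‖) (hn : ‖Sg - SG‖ = ‖g - G‖) :
    μ * ‖g‖ ≤ (3 / δ ^ 2 + 1) * ‖F‖ := by
  have hr0 : 0 < r := by rw [hr]; positivity
  have hh0 : 0 < h := by rw [hh]; positivity
  have hε2 : 0 < ε ^ 2 := by positivity
  -- step 4
  have h4 : μ * ‖g‖ ≤ δ⁻¹ * ‖X‖ + ‖F‖ := by
    have e1 : g = (1 - h * μ) • G + h • (Y + F) := by
      conv_lhs => rw [heq]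
      module
    have e2 : ‖g‖ ≤ (1 - h * μ) * ‖G‖ + h * (‖Y‖ + ‖F‖) := by
      calc ‖g‖ = ‖(1 - h * μ) • G + h • (Y + F)‖ := by rw [← e1]
        _ ≤ ‖(1 - h * μ) • G‖ + ‖h • (Y + F)‖ := norm_add_le _ _
        _ = (1 - h * μ) * ‖G‖ + h * ‖Y + F‖ := by
            rw [norm_smul, norm_smul, Real.norm_of_nonneg (by linarith), Real.norm_of_nonneg hh0.le]
        _ ≤ _ := by gcongr; exact norm_add_le _ _
    have e3 : (1 - h * μ) * ‖G‖ ≤ (1 - h * μ) * ‖g‖ :=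
      mul_le_mul_of_nonneg_left hG (by linarith)
    have e4 : h * (μ * ‖g‖) ≤ h * (δ⁻¹ * ‖X‖ + ‖F‖) := by
      have := mul_le_mul_of_nonneg_left hY2 hh0.le
      nlinarith
    exact le_of_mul_le_mul_left e4 hh0
  have h2 : inner ℝ (g - G) X ≤ 2 / ε ^ 2 * ‖g - G‖ ^ 2 := by
    have e1 : inner ℝ (g - G) X = (ε ^ 2)⁻¹ * (inner ℝ (g - G) SG + inner ℝ (g - G) TG
        - 2 * inner ℝ (g - G) G) := by
      rw [hX, inner_smul_right, inner_sub_right, inner_add_right, inner_smul_right]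
    have e2 : ‖(Sg - g) - (SG - G)‖ ^ 2 = ‖Sg - g‖ ^ 2 - 2 * inner ℝ (Sg - g) (SG - G)
      + ‖SG - G‖ ^ 2 := norm_sub_sq_real _ _
    have e3 : inner ℝ (Sg - g) (SG - G) - inner ℝ (SG - G) (SG - G)
        = - (inner ℝ (g - G) SG + inner ℝ (g - G) TG - 2 * inner ℝ (g - G) G) := by
      rw [← inner_sub_left]
      have : Sg - g - (SG - G) = (Sg - SG) - (g - G) := by abel
      rw [this, inner_sub_left, inner_sub_right (Sg - SG), inner_sub_right (g - G), hS, hT]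
      ring
    rw [real_inner_self_eq_norm_sq] at e3
    have e4 : ‖(Sg - g) - (SG - G)‖ ≤ 2 * ‖g - G‖ := by
      have : Sg - g - (SG - G) = (Sg - SG) - (g - G) := by abel
      rw [this]
      calc _ ≤ ‖Sg - SG‖ + ‖g - G‖ := norm_sub_le _ _
        _ = _ := by rw [hn]; ring
    have e5 : ‖(Sg - g) - (SG - G)‖ ^ 2 ≤ (2 * ‖g - G‖) ^ 2 := by gcongr
    have e6 : ‖SG - G‖ ^ 2 ≤ ‖Sg - g‖ ^ 2 := by gcongr
    rw [e1, div_mul_eq_mul_div, ← div_eq_inv_mul]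
    gcongr
    nlinarith
  have h3 : inner ℝ G X ≤ 0 := by
    rw [hX, inner_smul_right, inner_sub_right, inner_add_right, inner_smul_right,
      real_inner_self_eq_norm_sq]
    have a1 := real_inner_le_norm G SG
    have a2 := real_inner_le_norm G TG
    rw [hSG] at a1
    rw [hTG] at a2
    apply mul_nonpos_of_nonneg_of_nonpos (by positivity)
    nlinarith
  have hgG : g - G = h • (Y - μ • G + F) := by
    conv_lhs => rw [heq]
    abel
  have h5 : h * (δ * ‖X‖ ^ 2 - ‖F‖ * ‖X‖) ≤ inner ℝ (g - G) X := by
    rw [hgG, inner_smul_left, inner_add_left, inner_sub_left, inner_smul_left]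
    simp only [RCLike.conj_to_real]
    have := neg_le_of_abs_le (abs_real_inner_le_norm F X)
    have h6 : μ * inner ℝ G X ≤ 0 := mul_nonpos_of_nonneg_of_nonpos hμ h3
    gcongr
    linarith
  have h6 : ‖g - G‖ ≤ h * (2 * (δ⁻¹ * ‖X‖ + ‖F‖)) := by
    rw [hgG, norm_smul, Real.norm_of_nonneg hh0.le]
    gcongr
    calc ‖Y - μ • G + F‖ ≤ ‖Y‖ + ‖μ • G‖ + ‖F‖ := (norm_add_le _ _).trans (by gcongr; exact norm_sub_le _ _)
      _ ≤ δ⁻¹ * ‖X‖ + μ * ‖g‖ + ‖F‖ := by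
        rw [norm_smul, Real.norm_of_nonneg hμ]; gcongr
      _ ≤ _ := by linarith
  set x := ‖X‖ with hx
  set φ := ‖F‖ with hφ
  have hx0 : 0 ≤ x := norm_nonneg _
  have hφ0 : 0 ≤ φ := norm_nonneg _
  have h7 : δ * x ^ 2 - φ * x ≤ 2 * r * (2 * (δ⁻¹ * x + φ)) ^ 2 := by
    have : h * (δ * x ^ 2 - φ * x) ≤ h * (2 * r * (2 * (δ⁻¹ * x + φ)) ^ 2) := by
      calc _ ≤ _ := h5
        _ ≤ _ := h2
        _ ≤ 2 / ε ^ 2 * (h * (2 * (δ⁻¹ * x + φ))) ^ 2 := by gcongr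
        _ = _ := by rw [hh]; field_simp
    exact le_of_mul_le_mul_left this hh0
  have h8 : x ≤ 3 / δ * φ := scal_aux hδ hδ1 hr hx0 hφ0 h7
  calc μ * ‖g‖ ≤ δ⁻¹ * x + φ := h4
    _ ≤ δ⁻¹ * (3 / δ * φ) + φ := by gcongr
    _ = _ := by field_simp

lemma inner_toLp_aux {f g : ℝ × ℝ → ℝ} (hf : MemLp f 2) (hg : MemLp g 2) :
    inner ℝ (hf.toLp f) (hg.toLp g) = ∫ p, f p * g p := by
  rw [L2.inner_def]
  apply integral_congr_ae
  filter_upwards [hf.coeFn_toLp, hg.coeFn_toLp] with p h1 h2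
  rw [h1, h2]; simp [mul_comm]

lemma norm_toLp_aux {f : ℝ × ℝ → ℝ} (hf : MemLp f 2) :
    ‖hf.toLp f‖ ^ 2 = ∫ p, f p ^ 2 := by
  rw [← real_inner_self_eq_norm_sq, inner_toLp_aux]
  simp [sq]

lemma norm_toLp_aux' {f : ℝ × ℝ → ℝ} (hf : MemLp f 2) :
    ‖hf.toLp f‖ = √(∫ p, f p ^ 2) := by
  rw [← norm_toLp_aux hf, Real.sqrt_sq (norm_nonneg _)]

lemma memLp_shift {g : ℝ × ℝ → ℝ} (hg : MemLp g 2) (w : ℝ × ℝ) :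
    MemLp (fun p => g (p + w)) 2 :=
  hg.comp_measurePreserving (measurePreserving_add_right volume w)

lemma memLp_bmul {g c : ℝ × ℝ → ℝ} (hg : MemLp g 2) (hc : Measurable c) (K : ℝ)
    (hK : ∀ p, |c p| ≤ K) : MemLp (fun p => c p * g p) 2 := by
  refine hg.of_le_mul (c := K) (hc.aestronglyMeasurable.mul hg.1) ?_
  filter_upwards with p
  rw [norm_mul]
  gcongr
  exact hK p

noncomputable def tauG (R h : ℝ) (g : ℝ × ℝ → ℝ) : ℝ × ℝ → ℝ :=
  fun p => (if -R ≤ p.1 then (1:ℝ) else 0) * g (p + (h, 0))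

noncomputable def lapG (ε : ℝ) (g : ℝ × ℝ → ℝ) : ℝ × ℝ → ℝ :=
  fun p => (ε ^ 2)⁻¹ * (g (p + (0, ε)) + g (p + (0, -ε)) - 2 * g p)

lemma memLp_tau {g : ℝ × ℝ → ℝ} (hg : MemLp g 2) (R h : ℝ) : MemLp (tauG R h g) 2 := by
  refine memLp_bmul (memLp_shift hg (h, 0)) ?_ 1 ?_
  · exact Measurable.ite (measurableSet_le measurable_const measurable_fst) measurable_const
      measurable_const
  · intro p; split_ifs <;> simp

lemma memLp_lap {g : ℝ × ℝ → ℝ} (hg : MemLp g 2) (ε : ℝ) : MemLp (lapG ε g) 2 :=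
  (((memLp_shift hg (0, ε)).add (memLp_shift hg (0, -ε))).sub (hg.const_mul 2)).const_mul _

lemma tau_contr {g : ℝ × ℝ → ℝ} (hg : MemLp g 2) (R h : ℝ) :
    ‖(memLp_tau hg R h).toLp _‖ ≤ ‖hg.toLp _‖ := by
  rw [norm_toLp_aux', norm_toLp_aux']
  apply Real.sqrt_le_sqrt
  rw [← integral_add_right_eq_self (fun p => g p ^ 2) ((h, 0) : ℝ × ℝ)]
  apply integral_mono (memLp_tau hg R h).integrable_sq (memLp_shift hg (h, 0)).integrable_sq
  intro p
  simp only [tauG]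
  split_ifs
  · simp
  · simp; positivity

lemma norm_shift {g : ℝ × ℝ → ℝ} (hg : MemLp g 2) (w : ℝ × ℝ) :
    ‖(memLp_shift hg w).toLp _‖ = ‖hg.toLp _‖ := by
  rw [norm_toLp_aux', norm_toLp_aux', integral_add_right_eq_self (fun p => g p ^ 2) w]

lemma energy_aux {δ r h ε μ R : ℝ} (hδ : 0 < δ) (hδ1 : δ < 1) (hr : r = δ ^ 3 / 32) (hε : 0 < ε)
    (hh : h = r * ε ^ 2) (hμ : 0 ≤ μ) (hhμ : h * μ ≤ 1)
    (g a F : ℝ × ℝ → ℝ) (hg : MemLp g 2) (hF : MemLp F 2) (ha : Measurable a)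
    (ha1 : ∀ p, δ ≤ a p) (ha2 : ∀ p, a p ≤ δ⁻¹)
    (heq : ∀ p, g p = tauG R h g p + h * (a p * lapG ε (tauG R h g) p - μ * tauG R h g p + F p)) :
    μ * √(∫ p, g p ^ 2) ≤ (3 / δ ^ 2 + 1) * √(∫ p, F p ^ 2) := by
  rw [← norm_toLp_aux' hg, ← norm_toLp_aux' hF]
  have hG := memLp_tau hg R h
  have hX := memLp_lap hG ε
  have haK : ∀ p, |a p| ≤ δ⁻¹ := fun p => by
    rw [abs_of_nonneg (hδ.le.trans (ha1 p))]; exact ha2 p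
  have hY := memLp_bmul hX ha δ⁻¹ haK
  have hSg := memLp_shift hg (0, ε)
  have hSG := memLp_shift hG (0, ε)
  have hTG := memLp_shift hG (0, -ε)
  refine hilb_aux hδ hδ1 hr hε hh hμ hhμ (hg.toLp g) (hG.toLp _) (hY.toLp _) (hF.toLp _)
    (hSg.toLp _) (hSG.toLp _) (hTG.toLp _) (hX.toLp _) ?_ ?_ ?_ ?_ ?_ ?_ ?_ ?_ ?_ ?_ ?_
  · rw [← MemLp.toLp_add, ← MemLp.toLp_const_smul, ← MemLp.toLp_sub, ← MemLp.toLp_const_smul]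
    rfl
  · rw [← MemLp.toLp_const_smul, ← MemLp.toLp_sub, ← MemLp.toLp_add, ← MemLp.toLp_const_smul,
      ← MemLp.toLp_add]
    congr 1
    funext p
    exact heq p
  · rw [norm_toLp_aux, inner_toLp_aux, ← integral_const_mul]
    apply integral_mono (hX.integrable_sq.const_mul _) (hY.integrable_mul hX)
    intro p
    have := ha1 p
    simp only [Pi.mul_apply]
    nlinarith [sq_nonneg (lapG ε (tauG R h g) p)]
  · apply le_of_sq_le_sq _ (by positivity)
    rw [mul_pow, norm_toLp_aux, norm_toLp_aux, ← integral_const_mul]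
    apply integral_mono hY.integrable_sq (hX.integrable_sq.const_mul _)
    intro p
    simp only [mul_pow]
    have := hδ.le.trans (ha1 p)
    have := ha2 p
    gcongr
  · exact tau_contr hg R h
  · exact norm_shift hG _
  · exact norm_shift hG _
  · rw [← MemLp.toLp_sub, ← MemLp.toLp_sub, inner_toLp_aux, inner_toLp_aux,
      ← integral_add_right_eq_self _ ((0, ε) : ℝ × ℝ)]
    have e0 : ((0 : ℝ), (0 : ℝ)) = 0 := rfl
    simp [add_assoc, e0]
  · rw [← MemLp.toLp_sub, ← MemLp.toLp_sub, inner_toLp_aux, inner_toLp_aux,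
      ← integral_add_right_eq_self (fun p => (g - tauG R h g) p * _) ((0, ε) : ℝ × ℝ)]
    simp
  · rw [← MemLp.toLp_sub, ← MemLp.toLp_sub]
    refine le_trans (le_of_eq ?_) (tau_contr (hSg.sub hg) R h)
    congr 2
    funext p
    simp only [tauG, Pi.sub_apply]
    have : p + (0, ε) + (h, 0) = p + (h, 0) + (0, ε) := by abel
    rw [this]
    simp [mul_sub]
  · rw [← MemLp.toLp_sub, ← MemLp.toLp_sub]
    exact norm_shift (hg.sub hG) (0, ε)

noncomputable def stepP (R h ε μ : ℝ) (a g : ℝ × ℝ → ℝ) : ℝ × ℝ → ℝ :=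
  fun p => tauG R h g p + h * (a p * lapG ε (tauG R h g) p - μ * tauG R h g p)

lemma stepP_eq {R h ε μ r : ℝ} (hε : 0 < ε) (hh : h = r * ε ^ 2) (a g : ℝ × ℝ → ℝ) (p : ℝ × ℝ)
    (hp : -R ≤ p.1) :
    stepP R h ε μ a g p = (1 - 2 * r * a p - μ * h) * g (p + (h, 0)) +
      r * a p * (g (p + (h, ε)) + g (p + (h, -ε))) := by
  have e1 : p + (0, ε) + (h, 0) = p + (h, ε) := by rw [add_assoc]; simp
  have e2 : p + (0, -ε) + (h, 0) = p + (h, -ε) := by rw [add_assoc]; simp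
  simp only [stepP, lapG, tauG, e1, e2]
  simp only [Prod.fst_add, add_zero, hp, if_true]
  rw [hh]; field_simp; ring

lemma stepP_zero {R h ε μ : ℝ} (a g : ℝ × ℝ → ℝ) (p : ℝ × ℝ) (hp : ¬ -R ≤ p.1) :
    stepP R h ε μ a g p = 0 := by
  simp only [stepP, lapG, tauG]
  simp [hp]

noncomputable def iterG (R h ε μ : ℝ) (a F : ℝ × ℝ → ℝ) : ℕ → ℝ × ℝ → ℝ
  | 0 => fun _ => 0
  | m + 1 => fun p => stepP R h ε μ a (iterG R h ε μ a F m) p + h * F p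

lemma iterG_memLp {R h ε μ δ : ℝ} {a F : ℝ × ℝ → ℝ} (hF : MemLp F 2) (ha : Measurable a)
    (haK : ∀ p, |a p| ≤ δ⁻¹) (m : ℕ) : MemLp (iterG R h ε μ a F m) 2 := by
  induction m with
  | zero => exact MemLp.zero
  | succ m ih =>
    have hG := memLp_tau ih R h
    exact (hG.add (((memLp_bmul (memLp_lap hG ε) ha δ⁻¹ haK).sub (hG.const_mul μ)).const_mul h)).add
      (hF.const_mul h)

lemma compare_aux {δ r h ε μ R : ℝ} (hδ : 0 < δ) (hr : 0 < r) (hε : 0 < ε)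
    (hh : h = r * ε ^ 2)
    (v a F : ℝ × ℝ → ℝ) (hF : MemLp F 2) (ha : Measurable a)
    (ha1 : ∀ p, δ ≤ a p) (ha2 : ∀ p, a p ≤ δ⁻¹) (hCFL : 2 * r * δ⁻¹ + μ * h ≤ 1)
    (hF0 : ∀ p, 0 ≤ F p) (hF1 : ∀ p : ℝ × ℝ, R < p.1 → F p = 0)
    (hF2 : ∀ p : ℝ × ℝ, p.1 < -R → F p = 0)
    (hv1 : ∀ p : ℝ × ℝ, R < p.1 → v p = 0) (hv2 : ∀ p : ℝ × ℝ, p.1 < -R → v p = 0)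
    (hsub : ∀ p : ℝ × ℝ, -R ≤ p.1 → v p ≤ (1 - 2 * r * a p - μ * h) * v (p + (h, 0)) +
      r * a p * (v (p + (h, ε)) + v (p + (h, -ε))) + h * F p) :
    ∃ g : ℝ × ℝ → ℝ, MemLp g 2 ∧ (∀ p, v p ≤ g p) ∧
      (∀ p, g p = tauG R h g p + h * (a p * lapG ε (tauG R h g) p - μ * tauG R h g p + F p)) := by
  have hh0 : 0 < h := by rw [hh]; positivity
  have haK : ∀ p, |a p| ≤ δ⁻¹ := fun p => by
    rw [abs_of_nonneg (hδ.le.trans (ha1 p))]; exact ha2 p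
  have hc0 : ∀ p, 0 ≤ 1 - 2 * r * a p - μ * h := fun p => by
    have : 2 * r * a p ≤ 2 * r * δ⁻¹ := by gcongr; exact ha2 p
    linarith
  have hc1 : ∀ p, 0 ≤ r * a p := fun p => mul_nonneg hr.le (hδ.le.trans (ha1 p))
  set G := iterG R h ε μ a F with hGdef
  have hneg : ∀ m, ∀ p : ℝ × ℝ, p.1 < -R → G m p = 0 := by
    intro m p hp
    cases m with
    | zero => rfl
    | succ m =>
      simp only [hGdef, iterG]
      rw [stepP_zero _ _ _ (not_le.2 hp), hF2 p hp]; simp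
  have hA : ∀ m : ℕ, ∀ p : ℝ × ℝ, R - m * h < p.1 → G (m + 1) p = G m p := by
    intro m
    induction m with
    | zero =>
      intro p hp
      have : F p = 0 := hF1 p (by simpa using hp)
      simp [hGdef, iterG, stepP, lapG, tauG, this]
    | succ m ih =>
      intro p hp
      by_cases hpR : -R ≤ p.1
      · have hs : ∀ y, G (m + 1) (p + (h, y)) = G m (p + (h, y)) := by
          intro y
          apply ih
          push_cast at hp
          simp; linarith
        change stepP R h ε μ a (G (m + 1)) p + h * F p = stepP R h ε μ a (G m) p + h * F p
        rw [stepP_eq hε hh _ _ _ hpR, stepP_eq hε hh _ _ _ hpR, hs, hs, hs]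
      · rw [hneg _ p (not_le.1 hpR), hneg _ p (not_le.1 hpR)]
  have hC : ∀ m : ℕ, ∀ p : ℝ × ℝ, R - m * h < p.1 → v p ≤ G m p := by
    intro m
    induction m with
    | zero =>
      intro p hp
      rw [hv1 p (by simpa using hp)]
      simp [hGdef, iterG]
    | succ m ih =>
      intro p hp
      by_cases hpR : -R ≤ p.1
      · have hs : ∀ y, v (p + (h, y)) ≤ G m (p + (h, y)) := by
          intro y
          apply ih
          push_cast at hp
          simp; linarith
        change _ ≤ stepP R h ε μ a (G m) p + h * F p
        rw [stepP_eq hε hh _ _ _ hpR]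
        refine (hsub p hpR).trans ?_
        have := hc0 p
        have := hc1 p
        gcongr <;> exact hs _
      · rw [hneg _ p (not_le.1 hpR), hv2 p (not_le.1 hpR)]
  obtain ⟨M, hM⟩ := exists_nat_gt (2 * R / h)
  rw [div_lt_iff₀ hh0] at hM
  refine ⟨G M, iterG_memLp hF ha haK M, ?_, ?_⟩
  · intro p
    by_cases hpR : -R ≤ p.1
    · exact hC M p (by linarith)
    · rw [hneg _ p (not_le.1 hpR), hv2 p (not_le.1 hpR)]
  · intro p
    have : G M p = G (M + 1) p := by
      by_cases hpR : -R ≤ p.1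
      · exact (hA M p (by linarith)).symm
      · rw [hneg _ p (not_le.1 hpR), hneg _ p (not_le.1 hpR)]
    conv_lhs => rw [this]
    change stepP R h ε μ a (G M) p + h * F p = _
    simp only [stepP]; ring

lemma taylor2_aux {z z1 z2 z3 : ℝ → ℂ} {K ε : ℝ} (hε : 0 ≤ ε)
    (h1 : ∀ s, HasDerivAt z (z1 s) s) (h2 : ∀ s, HasDerivAt z1 (z2 s) s)
    (h3 : ∀ s, HasDerivAt z2 (z3 s) s) (hK : ∀ s, ‖z3 s‖ ≤ K) :
    ‖z ε + z (-ε) - 2 * z 0 - (ε : ℂ) ^ 2 * z2 0‖ ≤ 2 * K * ε ^ 3 := by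
  have hK0 : 0 ≤ K := (norm_nonneg _).trans (hK 0)
  have neg : ∀ (w w' : ℝ → ℂ), (∀ s, HasDerivAt w (w' s) s) → ∀ s : ℝ,
      HasDerivAt (fun s => w (-s)) (-(w' (-s))) s := by
    intro w w' hw s
    have := (hw (-s)).scomp s (hasDerivAt_neg s)
    exact this.congr_deriv (by simp)
  have lip : ∀ s t : ℝ, ‖z2 s - z2 t‖ ≤ K * |s - t| := by
    intro s t
    have := Convex.norm_image_sub_le_of_norm_hasDerivWithin_le (f := z2) (f' := z3) (s := Set.univ)
      (C := K) (fun x _ => (h3 x).hasDerivWithinAt) (fun x _ => hK x) convex_univ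
      (Set.mem_univ t) (Set.mem_univ s)
    simpa using this
  have hofr : ∀ s : ℝ, HasDerivAt (fun s : ℝ => (s : ℂ)) 1 s := fun s =>
    (hasDerivAt_id s).ofReal_comp
  have d1 : ∀ s : ℝ, HasDerivAt (fun s : ℝ => z1 s - z1 (-s) - 2 * (s : ℂ) * z2 0)
      (z2 s + z2 (-s) - 2 * z2 0) s := by
    intro s
    have := ((h2 s).sub (neg z1 z2 h2 s)).sub (((hofr s).const_mul 2).mul_const (z2 0))
    refine this.congr_deriv ?_
    ring
  have d0 : ∀ s : ℝ, HasDerivAt (fun s : ℝ => z s + z (-s) - 2 * z 0 - (s : ℂ) ^ 2 * z2 0)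
      (z1 s - z1 (-s) - 2 * (s : ℂ) * z2 0) s := by
    intro s
    have := (((h1 s).add (neg z z1 h1 s)).sub_const (2 * z 0)).sub
      (((hofr s).pow 2).mul_const (z2 0))
    refine this.congr_deriv ?_
    simp; ring
  have b1 : ∀ s ∈ Set.Icc 0 ε, ‖z1 s - z1 (-s) - 2 * (s : ℂ) * z2 0‖ ≤ 2 * K * ε * ε := by
    intro s hs
    have := norm_image_sub_le_of_norm_deriv_le_segment' (a := 0) (b := ε) (C := 2 * K * ε)
      (fun x _ => (d1 x).hasDerivWithinAt) (fun x hx => ?_) s hs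
    · simp at this
      refine this.trans ?_
      gcongr
      exact hs.2
    · have e : z2 x + z2 (-x) - 2 * z2 0 = (z2 x - z2 0) + (z2 (-x) - z2 0) := by ring
      rw [e]
      have a1 := lip x 0
      have a2 := lip (-x) 0
      simp only [sub_zero, abs_neg, abs_of_nonneg hx.1] at a1 a2
      have : K * x ≤ K * ε := mul_le_mul_of_nonneg_left hx.2.le hK0
      refine (norm_add_le _ _).trans ?_
      linarith
  have := norm_image_sub_le_of_norm_deriv_le_segment' (a := 0) (b := ε) (C := 2 * K * ε * ε)
      (fun x _ => (d0 x).hasDerivWithinAt) (fun x hx => b1 x ⟨hx.1, hx.2.le⟩) ε ⟨hε, le_rfl⟩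
  have e0 : z 0 + z (-0) - 2 * z 0 - ((0 : ℝ) : ℂ) ^ 2 * z2 0 = 0 := by simp; ring
  rw [e0, sub_zero] at this
  refine this.trans (le_of_eq ?_)
  ring

lemma lip_aux {w w' : ℝ → ℂ} {K : ℝ} (h : ∀ s, HasDerivAt w (w' s) s) (hK : ∀ s, ‖w' s‖ ≤ K)
    (s t : ℝ) : ‖w s - w t‖ ≤ K * |s - t| := by
  have := Convex.norm_image_sub_le_of_norm_hasDerivWithin_le (f := w) (f' := w') (s := Set.univ)
      (C := K) (fun x _ => (h x).hasDerivWithinAt) (fun x _ => hK x) convex_univ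
      (Set.mem_univ t) (Set.mem_univ s)
  simpa using this

lemma taylor1_aux {w w' w'' : ℝ → ℂ} {K h : ℝ} (hh : 0 ≤ h) (h1 : ∀ s, HasDerivAt w (w' s) s)
    (h2 : ∀ s, HasDerivAt w' (w'' s) s) (hK : ∀ s, ‖w'' s‖ ≤ K) (t : ℝ) :
    ‖w (t + h) - w t - h * w' t‖ ≤ K * h * h := by
  have hK0 : 0 ≤ K := (norm_nonneg _).trans (hK 0)
  have hofr : ∀ s : ℝ, HasDerivAt (fun s : ℝ => ((s : ℂ))) 1 s := fun s =>
    (hasDerivAt_id s).ofReal_comp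
  have d : ∀ s : ℝ, HasDerivAt (fun s : ℝ => w s - (s : ℂ) * w' t) (w' s - w' t) s := by
    intro s
    have := (h1 s).sub ((hofr s).mul_const (w' t))
    exact this.congr_deriv (by simp)
  have := norm_image_sub_le_of_norm_deriv_le_segment' (a := t) (b := t + h) (C := K * h)
      (fun x _ => (d x).hasDerivWithinAt) (fun x hx => ?_) (t + h) ⟨by linarith, le_rfl⟩
  · have e : w (t + h) - w t - h * w' t
      = w (t + h) - ((t + h : ℝ) : ℂ) * w' t - (w t - (t : ℂ) * w' t) := by push_cast; ring
    rw [e]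
    refine this.trans (le_of_eq ?_)
    ring
  · refine (lip_aux h2 hK x t).trans ?_
    gcongr
    rw [abs_of_nonneg (by linarith [hx.1])]
    linarith [hx.2]

lemma consist_aux {v vt vtt vy vyt vyy vyyt vyyy : ℝ → ℝ → ℂ} {K : ℝ}
    (d1 : ∀ t y, HasDerivAt (fun s => v s y) (vt t y) t)
    (d2 : ∀ t y, HasDerivAt (fun s => vt s y) (vtt t y) t)
    (d3 : ∀ t y, HasDerivAt (fun s => v t s) (vy t y) y)
    (d4 : ∀ t y, HasDerivAt (fun s => vy t s) (vyy t y) y)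
    (d5 : ∀ t y, HasDerivAt (fun s => vyy t s) (vyyy t y) y)
    (d6 : ∀ t y, HasDerivAt (fun s => vy s y) (vyt t y) t)
    (d7 : ∀ t y, HasDerivAt (fun s => vyy s y) (vyyt t y) t)
    (k0 : ∀ t y, ‖v t y‖ ≤ K) (k1 : ∀ t y, ‖vt t y‖ ≤ K) (k2 : ∀ t y, ‖vtt t y‖ ≤ K)
    (k3 : ∀ t y, ‖vy t y‖ ≤ K) (k4 : ∀ t y, ‖vyy t y‖ ≤ K) (k5 : ∀ t y, ‖vyyy t y‖ ≤ K)
    (k6 : ∀ t y, ‖vyt t y‖ ≤ K) (k7 : ∀ t y, ‖vyyt t y‖ ≤ K)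
    {a β c A B C r h ε μ : ℝ} {f : ℂ} {t y : ℝ} (ha : 0 ≤ a) (haA : a ≤ A) (hβ : |β| ≤ B)
    (hcC : |c| ≤ C) (hμ : μ ≤ c - a * β ^ 2) (hCFL : (c - a * β ^ 2) * h + 2 * r * a ≤ 1)
    (hr : 0 < r) (hr1 : r ≤ 1) (hε : 0 < ε) (hε1 : ε ≤ 1) (hh : h = r * ε ^ 2)
    (hf : f = vt t y + a * vyy t y + 2 * Complex.I * ((a * β : ℝ) : ℂ) * vy t y - c * v t y) :
    ‖v t y‖ ≤ (1 - 2 * r * a - μ * h) * ‖v (t + h) y‖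
      + r * a * (‖v (t + h) (y + ε)‖ + ‖v (t + h) (y + -ε)‖)
      + h * (‖f‖ + (K + 2 * A * (K * (1 + B) ^ 3) + (A + 2 * (A * B) + C) * K) * ε) := by
  have hK0 : 0 ≤ K := (norm_nonneg _).trans (k0 0 0)
  have hB0 : 0 ≤ B := (abs_nonneg _).trans hβ
  have hA0 : 0 ≤ A := ha.trans haA
  have hC0 : 0 ≤ C := (abs_nonneg _).trans hcC
  have hh0 : 0 < h := by rw [hh]; positivity
  have hhε : h ≤ ε := by
    rw [hh]
    calc r * ε ^ 2 ≤ 1 * (ε * 1) := by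
          rw [sq]; gcongr
      _ = ε := by ring
  set T := t + h with hT
  set E : ℝ → ℂ := fun s => Complex.exp (Complex.I * (β * s : ℝ)) with hE
  have nE : ∀ s, ‖E s‖ = 1 := by
    intro s
    simp only [hE]
    rw [mul_comm]
    exact Complex.norm_exp_ofReal_mul_I _
  have dE : ∀ s : ℝ, HasDerivAt E (Complex.I * β * E s) s := by
    intro s
    have h1 : HasDerivAt (fun s : ℝ => Complex.I * ((β * s : ℝ) : ℂ)) (Complex.I * β) s := by
      have := (((hasDerivAt_id s).const_mul β).ofReal_comp).const_mul Complex.I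
      exact this.congr_deriv (by simp)
    have := h1.cexp
    exact this.congr_deriv (by simp only [hE]; ring)
  have dsh : ∀ (w w' : ℝ → ℝ → ℂ), (∀ t y, HasDerivAt (fun s => w t s) (w' t y) y) → ∀ s,
      HasDerivAt (fun s => w T (y + s)) (w' T (y + s)) s := by
    intro w w' hw s
    exact (hw T (y + s)).comp_const_add y s
  set z : ℝ → ℂ := fun s => E s * v T (y + s) with hz
  set z1 : ℝ → ℂ := fun s => E s * (Complex.I * β * v T (y + s) + vy T (y + s)) with hz1
  set z2 : ℝ → ℂ := fun s => E s * ((Complex.I * β) ^ 2 * v T (y + s)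
    + 2 * (Complex.I * β) * vy T (y + s) + vyy T (y + s)) with hz2
  set z3 : ℝ → ℂ := fun s => E s * ((Complex.I * β) ^ 3 * v T (y + s)
    + 3 * (Complex.I * β) ^ 2 * vy T (y + s) + 3 * (Complex.I * β) * vyy T (y + s)
    + vyyy T (y + s)) with hz3
  have s0 := dsh v vy d3
  have s1 := dsh vy vyy d4
  have s2 := dsh vyy vyyy d5
  have D1 : ∀ s, HasDerivAt z (z1 s) s := fun s =>
    ((dE s).mul (s0 s)).congr_deriv (by simp only [hz1]; ring)
  have D2 : ∀ s, HasDerivAt z1 (z2 s) s := fun s =>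
    ((dE s).mul (((s0 s).const_mul (Complex.I * β)).add (s1 s))).congr_deriv
      (by simp only [hz2, Pi.add_apply]; ring)
  have D3 : ∀ s, HasDerivAt z2 (z3 s) s := fun s =>
    ((dE s).mul ((((s0 s).const_mul ((Complex.I * β) ^ 2)).add
      ((s1 s).const_mul (2 * (Complex.I * β)))).add (s2 s))).congr_deriv
      (by simp only [hz3, Pi.add_apply]; ring)
  have nI : ‖Complex.I * (β : ℂ)‖ ≤ B := by simpa using hβ
  have bz3 : ∀ s, ‖z3 s‖ ≤ K * (1 + B) ^ 3 := by
    intro s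
    simp only [hz3]
    rw [norm_mul, nE, one_mul]
    calc _ ≤ ‖(Complex.I * β) ^ 3 * v T (y + s)‖ + ‖3 * (Complex.I * β) ^ 2 * vy T (y + s)‖
          + ‖3 * (Complex.I * β) * vyy T (y + s)‖ + ‖vyyy T (y + s)‖ := norm_add₄_le
      _ ≤ B ^ 3 * K + 3 * B ^ 2 * K + 3 * B * K + K := by
        simp only [norm_mul _ (v _ _), norm_mul _ (vy _ _), norm_mul _ (vyy _ _), norm_mul (3 : ℂ),
          norm_pow, Complex.norm_ofNat]
        gcongr
        · exact k0 _ _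
        · exact k3 _ _
        · exact k4 _ _
        · exact k5 _ _
      _ = _ := by ring
  have B2 := taylor2_aux hε.le D1 D2 D3 bz3
  set e2 := z ε + z (-ε) - 2 * z 0 - (ε : ℂ) ^ 2 * z2 0 with he2
  have B1 : ‖v T y - v t y - h * vt t y‖ ≤ K * h * h :=
    taylor1_aux hh0.le (fun s => d1 s y) (fun s => d2 s y) (fun s => k2 s y) t
  set e1 := v T y - v t y - h * vt t y with he1
  have hTt : |T - t| = h := by rw [hT]; simp [abs_of_pos hh0]
  have L0 := lip_aux (fun s => d1 s y) (fun s => k1 s y) T t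
  have L1 := lip_aux (fun s => d6 s y) (fun s => k6 s y) T t
  have L2 := lip_aux (fun s => d7 s y) (fun s => k7 s y) T t
  rw [hTt] at L0 L1 L2
  set e3 := a * (vyy T y - vyy t y) + 2 * Complex.I * ((a * β : ℝ) : ℂ) * (vy T y - vy t y)
    - c * (v T y - v t y) with he3
  have B3 : ‖e3‖ ≤ (A + 2 * (A * B) + C) * (K * h) := by
    have : ‖e3‖ ≤ ‖(a : ℂ) * (vyy T y - vyy t y)‖
        + ‖2 * Complex.I * ((a * β : ℝ) : ℂ) * (vy T y - vy t y)‖ + ‖c * (v T y - v t y)‖ :=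
      (norm_sub_le _ _).trans (by gcongr; exact norm_add_le _ _)
    refine this.trans ?_
    simp only [norm_mul, Complex.norm_real, Complex.norm_I, Complex.norm_ofNat, Real.norm_eq_abs,
      abs_of_nonneg ha, mul_one]
    have : A * (K * h) + 2 * (A * B) * (K * h) + C * (K * h) = (A + 2 * (A * B) + C) * (K * h) := by
      ring
    rw [← this]
    gcongr
  have hz0 : z 0 = v T y := by simp [hz, hE]
  have hz20 : z2 0 = vyy T y + 2 * Complex.I * β * vy T y - β ^ 2 * v T y := by
    simp only [hz2, hE]
    simp [mul_pow]; ring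
  have key : v t y = ((1 - 2 * r * a - (c - a * β ^ 2) * h : ℝ) : ℂ) * v T y
      + ((r * a : ℝ) : ℂ) * (z ε + z (-ε)) - ((r * a : ℝ) : ℂ) * e2 - h * e3 - h * f - e1 := by
    rw [he1, he2, he3, hf, hz0, hz20, hh]
    push_cast
    ring
  have c0 : 0 ≤ 1 - 2 * r * a - (c - a * β ^ 2) * h := by linarith
  have nz : ∀ s, ‖z s‖ = ‖v T (y + s)‖ := by
    intro s; simp only [hz]; rw [norm_mul, nE, one_mul]
  have ra0 : 0 ≤ r * a := by positivity
  have N1 : ‖v t y‖ ≤ (1 - 2 * r * a - (c - a * β ^ 2) * h) * ‖v T y‖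
      + r * a * (‖v T (y + ε)‖ + ‖v T (y + -ε)‖) + r * a * ‖e2‖ + h * ‖e3‖ + h * ‖f‖ + ‖e1‖ := by
    rw [key]
    refine (norm_sub_le _ _).trans (add_le_add ?_ le_rfl)
    refine (norm_sub_le _ _).trans (add_le_add ?_ ?_)
    · refine (norm_sub_le _ _).trans (add_le_add ?_ ?_)
      · refine (norm_sub_le _ _).trans (add_le_add ?_ ?_)
        · refine (norm_add_le _ _).trans (add_le_add ?_ ?_)
          · rw [norm_mul, Complex.norm_real, Real.norm_of_nonneg c0]
          · rw [norm_mul, Complex.norm_real, Real.norm_of_nonneg ra0, ← nz, ← nz]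
            gcongr
            exact norm_add_le _ _
        · rw [norm_mul, Complex.norm_real, Real.norm_of_nonneg ra0]
      · rw [norm_mul, Complex.norm_real, Real.norm_of_nonneg hh0.le]
    · rw [norm_mul, Complex.norm_real, Real.norm_of_nonneg hh0.le]
  have M0 : (1 - 2 * r * a - (c - a * β ^ 2) * h) * ‖v T y‖ ≤ (1 - 2 * r * a - μ * h) * ‖v T y‖ := by
    gcongr
  have M1 : ‖e1‖ ≤ h * (K * ε) := by
    refine B1.trans ?_
    have : h * (K * h) ≤ h * (K * ε) := by gcongr
    linarith
  have M2 : r * a * ‖e2‖ ≤ h * (2 * A * (K * (1 + B) ^ 3) * ε) := by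
    calc r * a * ‖e2‖ ≤ r * A * (2 * (K * (1 + B) ^ 3) * ε ^ 3) := by gcongr
      _ = _ := by rw [hh]; ring
  have M3 : h * ‖e3‖ ≤ h * ((A + 2 * (A * B) + C) * K * ε) := by
    gcongr
    refine B3.trans ?_
    rw [mul_assoc]
    gcongr
  linarith

lemma core_aux {v vt vtt vy vyt vyy vyyt vyyy : ℝ → ℝ → ℂ} {K : ℝ}
    (d1 : ∀ t y, HasDerivAt (fun s => v s y) (vt t y) t)
    (d2 : ∀ t y, HasDerivAt (fun s => vt s y) (vtt t y) t)
    (d3 : ∀ t y, HasDerivAt (fun s => v t s) (vy t y) y)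
    (d4 : ∀ t y, HasDerivAt (fun s => vy t s) (vyy t y) y)
    (d5 : ∀ t y, HasDerivAt (fun s => vyy t s) (vyyy t y) y)
    (d6 : ∀ t y, HasDerivAt (fun s => vy s y) (vyt t y) t)
    (d7 : ∀ t y, HasDerivAt (fun s => vyy s y) (vyyt t y) t)
    (k0 : ∀ t y, ‖v t y‖ ≤ K) (k1 : ∀ t y, ‖vt t y‖ ≤ K) (k2 : ∀ t y, ‖vtt t y‖ ≤ K)
    (k3 : ∀ t y, ‖vy t y‖ ≤ K) (k4 : ∀ t y, ‖vyy t y‖ ≤ K) (k5 : ∀ t y, ‖vyyy t y‖ ≤ K)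
    (k6 : ∀ t y, ‖vyt t y‖ ≤ K) (k7 : ∀ t y, ‖vyyt t y‖ ≤ K)
    {δ κ B C R : ℝ} (hδ : 0 < δ) (hδ1 : δ < 1) (hκ : 0 ≤ κ)
    {a β c : ℝ × ℝ → ℝ} {f : ℝ × ℝ → ℂ} (ham : Measurable a)
    (ha1 : ∀ p, δ ≤ a p) (ha2 : ∀ p, a p ≤ δ⁻¹) (hβ : ∀ p, |β p| ≤ B)
    (hcC : ∀ p, |c p| ≤ C) (hμ : ∀ p, δ * κ ≤ c p - a p * β p ^ 2)
    (hf : ∀ p : ℝ × ℝ, f p = vt p.1 p.2 + a p * vyy p.1 p.2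
      + 2 * Complex.I * ((a p * β p : ℝ) : ℂ) * vy p.1 p.2 - c p * v p.1 p.2)
    (hfL : MemLp (fun p => ‖f p‖) 2)
    (hsupp : ∀ t y, (t, y) ∉ Set.Icc (-R) R ×ˢ Set.Icc (-R) R → v t y = 0) :
    κ * √(∫ p : ℝ × ℝ, ‖v p.1 p.2‖ ^ 2) ≤ ((3 / δ ^ 2 + 1) / δ) * √(∫ p, ‖f p‖ ^ 2) := by
  have hK0 : 0 ≤ K := (norm_nonneg _).trans (k0 0 0)
  have hB0 : 0 ≤ B := (abs_nonneg _).trans (hβ 0)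
  have hC0 : 0 ≤ C := (abs_nonneg _).trans (hcC 0)
  set r : ℝ := δ ^ 3 / 32 with hr
  have hr0 : 0 < r := by positivity
  have hδ3 : δ ^ 3 ≤ 1 := pow_le_one₀ hδ.le hδ1.le
  have hδ2 : δ ^ 2 ≤ 1 := pow_le_one₀ hδ.le hδ1.le
  have hr1 : r ≤ 1 := by rw [hr]; linarith
  have hrδ : 2 * r * δ⁻¹ ≤ 1 / 2 := by
    have : 2 * r * δ⁻¹ = δ ^ 2 / 16 := by rw [hr]; field_simp; norm_num
    rw [this]; linarith
  set K' := K + 2 * δ⁻¹ * (K * (1 + B) ^ 3) + (δ⁻¹ + 2 * (δ⁻¹ * B) + C) * K with hK'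
  have hK'0 : 0 ≤ K' := by positivity
  set S : Set (ℝ × ℝ) := Set.Icc (-R) R ×ˢ Set.Icc (-R) R with hS
  have hSm : MeasurableSet S := measurableSet_Icc.prod measurableSet_Icc
  have hScp : IsCompact S := isCompact_Icc.prod isCompact_Icc
  set q : ℝ × ℝ → ℝ := S.indicator (fun _ => (1 : ℝ)) with hq
  have hqL : MemLp q 2 := memLp_indicator_const 2 hSm 1 (Or.inr hScp.measure_lt_top.ne)
  have hqm : Measurable q := measurable_const.indicator hSm
  have hq0 : ∀ p, 0 ≤ q p := fun p => Set.indicator_nonneg (fun _ _ => zero_le_one) p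
  have hq1 : ∀ p, q p ≤ 1 := fun p => by
    simp only [hq, Set.indicator]; split_ifs <;> norm_num
  have hqf : MemLp (fun p => q p * ‖f p‖) 2 :=
    memLp_bmul hfL hqm 1 (fun p => by rw [abs_of_nonneg (hq0 p)]; exact hq1 p)
  have main : ∀ ε : ℝ, 0 < ε → ε ≤ 1 → ε * (2 * (C + 1)) ≤ 1 →
      δ * κ * √(∫ p : ℝ × ℝ, ‖v p.1 p.2‖ ^ 2) ≤ (3 / δ ^ 2 + 1) * (√(∫ p, ‖f p‖ ^ 2)
        + K' * ε * √(∫ p, q p ^ 2)) := by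
    intro ε hε hε1 hεC
    set h := r * ε ^ 2 with hh
    have hh0 : 0 < h := by positivity
    have hCh : C * h ≤ 1 / 2 := by
      have : h ≤ ε := by
        rw [hh]
        calc r * ε ^ 2 ≤ 1 * (ε * 1) := by
              rw [sq]; gcongr
          _ = ε := by ring
      nlinarith
    have hcb : ∀ p, c p - a p * β p ^ 2 ≤ C := fun p => by
      have h1 := (abs_le.1 (hcC p)).2
      have h2 : 0 ≤ a p * β p ^ 2 := mul_nonneg (hδ.le.trans (ha1 p)) (sq_nonneg _)
      linarith
    have hμC : δ * κ ≤ C := (hμ 0).trans (hcb 0)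
    have hμ0 : 0 ≤ δ * κ := by positivity
    have hμh : δ * κ * h ≤ 1 / 2 := le_trans (by gcongr) hCh
    have hFL : MemLp (fun p => q p * ‖f p‖ + K' * ε * q p) 2 := hqf.add (hqL.const_mul _)
    have hout : ∀ p, p ∉ S → q p = 0 := fun p hp => by simp [hq, hp]
    obtain ⟨g, hgL, hvg, hgeq⟩ := compare_aux (μ := δ * κ) (R := R) hδ hr0 hε hh
      (fun p => ‖v p.1 p.2‖) a (fun p => q p * ‖f p‖ + K' * ε * q p) hFL ham ha1 ha2
      (by linarith) (fun p => by have := hq0 p; positivity)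
      (fun p hp => by
        have : q p = 0 := hout p (fun hS => by have := hS.1.2; linarith)
        simp [this])
      (fun p hp => by
        have : q p = 0 := hout p (fun hS => by have := hS.1.1; linarith)
        simp [this])
      (fun p hp => by
        have : v p.1 p.2 = 0 := hsupp _ _ (fun hS => by have := hS.1.2; simp at this; linarith)
        simp [this])
      (fun p hp => by
        have : v p.1 p.2 = 0 := hsupp _ _ (fun hS => by have := hS.1.1; simp at this; linarith)
        simp [this])
      (fun p hp => by
        have a0 : 0 ≤ a p := hδ.le.trans (ha1 p)
        have ra : 2 * r * a p ≤ 2 * r * δ⁻¹ := by gcongr; exact ha2 p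
        have c0 : 0 ≤ 1 - 2 * r * a p - δ * κ * h := by linarith
        by_cases hpS : p ∈ S
        · have q1 : q p = 1 := by simp [hq, hpS]
          have hcfl : (c p - a p * β p ^ 2) * h + 2 * r * a p ≤ 1 := by
            have : (c p - a p * β p ^ 2) * h ≤ C * h := by gcongr; exact hcb p
            linarith
          have := consist_aux d1 d2 d3 d4 d5 d6 d7 k0 k1 k2 k3 k4 k5 k6 k7 (t := p.1) (y := p.2)
            a0 (ha2 p) (hβ p) (hcC p) (hμ p) hcfl hr0 hr1 hε hε1 hh (hf p)
          simpa [q1] using this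
        · have : v p.1 p.2 = 0 := hsupp _ _ hpS
          have := hq0 p
          simp only [‹v p.1 p.2 = 0›, norm_zero]
          positivity)
    have hen := energy_aux (R := R) hδ hδ1 hr hε hh hμ0 (by linarith) g a _ hgL hFL ham ha1 ha2 hgeq
    have t1 : √(∫ p : ℝ × ℝ, ‖v p.1 p.2‖ ^ 2) ≤ √(∫ p, g p ^ 2) := by
      apply Real.sqrt_le_sqrt
      apply integral_mono_of_nonneg
      · filter_upwards with p; positivity
      · exact hgL.integrable_sq
      · filter_upwards with p
        have := hvg p
        gcongr
    have t2 : √(∫ p, (q p * ‖f p‖ + K' * ε * q p) ^ 2) ≤ √(∫ p, ‖f p‖ ^ 2)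
        + K' * ε * √(∫ p, q p ^ 2) := by
      rw [← norm_toLp_aux' hFL, ← norm_toLp_aux' hqL]
      have e : hFL.toLp _ = hqf.toLp _ + (K' * ε) • hqL.toLp _ := by
        rw [← MemLp.toLp_const_smul, ← MemLp.toLp_add]; rfl
      rw [e]
      refine (norm_add_le _ _).trans (add_le_add ?_ ?_)
      · rw [norm_toLp_aux']
        apply Real.sqrt_le_sqrt
        apply integral_mono hqf.integrable_sq hfL.integrable_sq
        intro p
        have := hq0 p
        have := hq1 p
        simp only
        gcongr
        exact mul_le_of_le_one_left (norm_nonneg _) (hq1 p)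
      · rw [norm_smul, Real.norm_of_nonneg (by positivity)]
    calc _ ≤ δ * κ * √(∫ p, g p ^ 2) := by gcongr
      _ ≤ _ := hen
      _ ≤ _ := by gcongr
  have fin : δ * κ * √(∫ p : ℝ × ℝ, ‖v p.1 p.2‖ ^ 2) ≤ (3 / δ ^ 2 + 1) * √(∫ p, ‖f p‖ ^ 2) := by
    apply le_of_forall_pos_le_add
    intro η hη
    set Z := (3 / δ ^ 2 + 1) * (K' * √(∫ p, q p ^ 2)) with hZ
    have hZ0 : 0 ≤ Z := by positivity
    set ε := min (1 / (2 * (C + 1))) (η / (Z + 1)) with hεd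
    have hε : 0 < ε := by positivity
    have e1 : ε * (2 * (C + 1)) ≤ 1 := by
      rw [← le_div_iff₀ (by positivity)]; exact min_le_left _ _
    have e2 : ε ≤ 1 := by nlinarith
    have e3 : ε * (Z + 1) ≤ η := by
      rw [← le_div_iff₀ (by positivity)]; exact min_le_right _ _
    have := main ε hε e2 e1
    have e4 : (3 / δ ^ 2 + 1) * (√(∫ p, ‖f p‖ ^ 2) + K' * ε * √(∫ p, q p ^ 2))
      = (3 / δ ^ 2 + 1) * √(∫ p, ‖f p‖ ^ 2) + Z * ε := by rw [hZ]; ring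
    rw [e4] at this
    nlinarith
  rw [div_mul_eq_mul_div, le_div_iff₀ hδ]
  linarith

def SmC {d : ℕ} (w : ℝ × (Fin d → ℝ) → ℝ) : Prop := ContDiff ℝ (⊤ : ℕ∞) w ∧ HasCompactSupport w

lemma SmC.pdt {d : ℕ} {w : ℝ × (Fin d → ℝ) → ℝ} (hw : SmC w) : SmC (pdt w) :=
  ⟨(hw.1.fderiv_right (m := (⊤ : ℕ∞)) (by simp)).clm_apply contDiff_const,
    hw.2.fderiv_apply ℝ _⟩

lemma SmC.pdx {d : ℕ} {w : ℝ × (Fin d → ℝ) → ℝ} (hw : SmC w) (j : Fin d) : SmC (pdx j w) :=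
  ⟨(hw.1.fderiv_right (m := (⊤ : ℕ∞)) (by simp)).clm_apply contDiff_const,
    hw.2.fderiv_apply ℝ _⟩

lemma SmC.box {n : ℕ} {w : ℝ × (Fin (n + 1) → ℝ) → ℝ} (hw : SmC w) :
    ∃ R : ℝ, ∀ t y (x : Fin n → ℝ), w (t, Fin.cons y x) ≠ 0 → |t| ≤ R ∧ |y| ≤ R ∧ ‖x‖ ≤ R := by
  obtain ⟨R, hR⟩ := hw.2.isCompact.isBounded.subset_closedBall 0
  refine ⟨R, fun t y x h => ?_⟩
  have h1 : (t, (Fin.cons y x : Fin (n + 1) → ℝ)) ∈ Metric.closedBall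
      (0 : ℝ × (Fin (n + 1) → ℝ)) R := hR (subset_tsupport _ h)
  rw [mem_closedBall_zero_iff, Prod.norm_def] at h1
  have h2 := (le_max_left _ _).trans h1
  have h3 := (le_max_right _ _).trans h1
  have hR0 : 0 ≤ R := (norm_nonneg _).trans h2
  simp only at h2 h3
  rw [pi_norm_le_iff_of_nonneg hR0] at h3
  refine ⟨h2, by simpa using h3 0, ?_⟩
  rw [pi_norm_le_iff_of_nonneg hR0]
  intro i
  simpa using h3 i.succ

lemma SmC.bdd {d : ℕ} {w : ℝ × (Fin d → ℝ) → ℝ} (hw : SmC w) : ∃ M, ∀ p, ‖w p‖ ≤ M :=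
  hw.2.exists_bound_of_continuous hw.1.continuous

lemma cont_cons {n : ℕ} : Continuous (fun z : (ℝ × ℝ) × (Fin n → ℝ) =>
    ((z.1.1, Fin.cons z.1.2 z.2) : ℝ × (Fin (n + 1) → ℝ))) := by
  refine Continuous.prodMk (by fun_prop) ?_
  refine continuous_pi fun i => ?_
  refine Fin.cases ?_ (fun i => ?_) i
  · simp; fun_prop
  · simp; fun_prop

noncomputable def pker {n : ℕ} (ξ x : Fin n → ℝ) : ℂ :=
  Complex.exp (-Complex.I * ((∑ j, ξ j * x j : ℝ) : ℂ))

lemma norm_pker {n : ℕ} (ξ x : Fin n → ℝ) : ‖pker ξ x‖ = 1 := by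
  unfold pker
  rw [neg_mul, mul_comm, ← neg_mul, ← Complex.ofReal_neg]
  exact Complex.norm_exp_ofReal_mul_I _

lemma cont_pker {n : ℕ} (ξ : Fin n → ℝ) : Continuous (pker ξ) := by
  unfold pker; fun_prop

lemma pF_eq {n : ℕ} (w : ℝ × (Fin (n + 1) → ℝ) → ℝ) (t y : ℝ) (ξ : Fin n → ℝ) :
    pFourier w t y ξ = ∫ x, (w (t, Fin.cons y x) : ℂ) * pker ξ x := rfl

lemma cont_slice {n : ℕ} {w : ℝ × (Fin (n + 1) → ℝ) → ℝ} (hw : SmC w) (t y : ℝ) (ξ : Fin n → ℝ) :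
    Continuous (fun x => (w (t, Fin.cons y x) : ℂ) * pker ξ x) := by
  refine Continuous.mul (Complex.continuous_ofReal.comp (hw.1.continuous.comp ?_)) (cont_pker ξ)
  exact cont_cons.comp (by fun_prop : Continuous fun x : Fin n → ℝ => ((t, y), x))

lemma SmC.dom {n : ℕ} {w : ℝ × (Fin (n + 1) → ℝ) → ℝ} (hw : SmC w) (ξ : Fin n → ℝ) :
    ∃ bound : (Fin n → ℝ) → ℝ, Integrable bound ∧
      ∀ t y x, ‖(w (t, Fin.cons y x) : ℂ) * pker ξ x‖ ≤ bound x := by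
  obtain ⟨R, hR⟩ := hw.box
  obtain ⟨M, hM⟩ := hw.bdd
  refine ⟨(Metric.closedBall 0 R).indicator (fun _ => M), ?_, ?_⟩
  · rw [integrable_indicator_iff Metric.isClosed_closedBall.measurableSet]
    exact integrableOn_const (isCompact_closedBall _ _).measure_lt_top.ne
  · intro t y x
    rw [norm_mul, norm_pker, mul_one, Complex.norm_real]
    by_cases hx : x ∈ Metric.closedBall (0 : Fin n → ℝ) R
    · rw [Set.indicator_of_mem hx]; exact hM _
    · rw [Set.indicator_of_notMem hx]
      have : w (t, Fin.cons y x) = 0 := by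
        by_contra h
        exact hx (by simpa using (hR t y x h).2.2)
      simp [this]

lemma pF_int {n : ℕ} {w : ℝ × (Fin (n + 1) → ℝ) → ℝ} (hw : SmC w) (t y : ℝ) (ξ : Fin n → ℝ) :
    Integrable (fun x => (w (t, Fin.cons y x) : ℂ) * pker ξ x) := by
  obtain ⟨b, hb, hb'⟩ := hw.dom ξ
  exact hb.mono' (cont_slice hw t y ξ).aestronglyMeasurable
    (Filter.Eventually.of_forall fun x => hb' t y x)

lemma pF_bdd {n : ℕ} {w : ℝ × (Fin (n + 1) → ℝ) → ℝ} (hw : SmC w) (ξ : Fin n → ℝ) :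
    ∃ K, ∀ t y, ‖pFourier w t y ξ‖ ≤ K := by
  obtain ⟨b, hb, hb'⟩ := hw.dom ξ
  exact ⟨∫ x, b x, fun t y => norm_integral_le_of_norm_le hb
    (Filter.Eventually.of_forall fun x => hb' t y x)⟩

lemma pF_cont {n : ℕ} {w : ℝ × (Fin (n + 1) → ℝ) → ℝ} (hw : SmC w) (ξ : Fin n → ℝ) :
    Continuous (fun q : ℝ × ℝ => pFourier w q.1 q.2 ξ) := by
  obtain ⟨b, hb, hb'⟩ := hw.dom ξ
  refine continuous_of_dominated (bound := b)
    (fun q => (cont_slice hw q.1 q.2 ξ).aestronglyMeasurable)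
    (fun q => Filter.Eventually.of_forall fun x => hb' q.1 q.2 x) hb
    (Filter.Eventually.of_forall fun x => ?_)
  refine Continuous.mul (Complex.continuous_ofReal.comp (hw.1.continuous.comp ?_)) continuous_const
  exact cont_cons.comp (by fun_prop : Continuous fun q : ℝ × ℝ => (q, x))

lemma SmC.hasF {d : ℕ} {w : ℝ × (Fin d → ℝ) → ℝ} (hw : SmC w) (p) :
    HasFDerivAt w (fderiv ℝ w p) p :=
  (hw.1.differentiable (by simp) p).hasFDerivAt

lemma pF_dt {n : ℕ} {w : ℝ × (Fin (n + 1) → ℝ) → ℝ} (hw : SmC w) (ξ : Fin n → ℝ) (t y : ℝ) :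
    HasDerivAt (fun s => pFourier w s y ξ) (pFourier (pdt w) t y ξ) t := by
  obtain ⟨b, hb, hb'⟩ := hw.pdt.dom ξ
  refine (hasDerivAt_integral_of_dominated_loc_of_deriv_le (s := Set.univ) (bound := b)
    (F' := fun s x => (pdt w (s, Fin.cons y x) : ℂ) * pker ξ x) Filter.univ_mem
    (Filter.Eventually.of_forall fun s => (cont_slice hw s y ξ).aestronglyMeasurable)
    (pF_int hw t y ξ) (cont_slice hw.pdt t y ξ).aestronglyMeasurable
    (Filter.Eventually.of_forall fun x s _ => hb' s y x) hb
    (Filter.Eventually.of_forall fun x s _ => ?_)).2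
  have h1 : HasDerivAt (fun s : ℝ => ((s, Fin.cons y x) : ℝ × (Fin (n + 1) → ℝ))) (1, 0) s :=
    (hasDerivAt_id s).prodMk (hasDerivAt_const s _)
  exact (((hw.hasF _).comp_hasDerivAt s h1).ofReal_comp).mul_const _

lemma pF_dy {n : ℕ} {w : ℝ × (Fin (n + 1) → ℝ) → ℝ} (hw : SmC w) (ξ : Fin n → ℝ) (t y : ℝ) :
    HasDerivAt (fun s => pFourier w t s ξ) (pFourier (pdx 0 w) t y ξ) y := by
  obtain ⟨b, hb, hb'⟩ := (hw.pdx 0).dom ξ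
  refine (hasDerivAt_integral_of_dominated_loc_of_deriv_le (s := Set.univ) (bound := b)
    (F' := fun s x => (pdx 0 w (t, Fin.cons s x) : ℂ) * pker ξ x) Filter.univ_mem
    (Filter.Eventually.of_forall fun s => (cont_slice hw t s ξ).aestronglyMeasurable)
    (pF_int hw t y ξ) (cont_slice (hw.pdx 0) t y ξ).aestronglyMeasurable
    (Filter.Eventually.of_forall fun x s _ => hb' t s x) hb
    (Filter.Eventually.of_forall fun x s _ => ?_)).2
  have h1 : HasDerivAt (fun s : ℝ => ((t, Fin.cons s x) : ℝ × (Fin (n + 1) → ℝ)))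
      (0, Pi.single 0 1) s := by
    refine (hasDerivAt_const s t).prodMk (hasDerivAt_pi.2 fun i => ?_)
    refine Fin.cases ?_ (fun i => ?_) i
    · simpa using hasDerivAt_id' s
    · simpa using hasDerivAt_const s (x i)
  exact (((hw.hasF _).comp_hasDerivAt s h1).ofReal_comp).mul_const _

lemma pF_dx {n : ℕ} {w : ℝ × (Fin (n + 1) → ℝ) → ℝ} (hw : SmC w) (ξ : Fin n → ℝ) (t y : ℝ)
    (j : Fin n) :
    pFourier (pdx j.succ w) t y ξ = Complex.I * ξ j * pFourier w t y ξ := by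
  have hI := pF_int hw t y ξ
  have hI' := pF_int (hw.pdx j.succ) t y ξ
  have key := integral_bilinear_hasLineDerivAt_right_eq_neg_left_of_integrable (μ := volume)
    (B := ContinuousLinearMap.mul ℝ ℂ) (v := (Pi.single j 1 : Fin n → ℝ))
    (f := pker ξ) (f' := fun x => -Complex.I * ξ j * pker ξ x)
    (g := fun x => (w (t, Fin.cons y x) : ℂ))
    (g' := fun x => (pdx j.succ w (t, Fin.cons y x) : ℂ)) ?_ ?_ ?_ ?_ ?_
  · simp only [ContinuousLinearMap.mul_apply'] at key
    rw [pF_eq, pF_eq, ← integral_const_mul]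
    have e1 : ∀ x, (pdx j.succ w (t, Fin.cons y x) : ℂ) * pker ξ x
      = pker ξ x * (pdx j.succ w (t, Fin.cons y x) : ℂ) := fun x => mul_comm _ _
    simp_rw [e1]
    rw [key, ← integral_neg]
    congr 1; funext x; ring
  · refine (hI.const_mul (-Complex.I * ξ j)).congr (Filter.Eventually.of_forall fun x => ?_)
    simp; ring
  · refine hI'.congr (Filter.Eventually.of_forall fun x => ?_)
    simp; ring
  · refine hI.congr (Filter.Eventually.of_forall fun x => ?_)
    simp; ring
  · intro x _
    have h1 : HasDerivAt (fun s : ℝ => ∑ i, ξ i * (x + s • (Pi.single j 1 : Fin n → ℝ)) i)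
        (ξ j) 0 := by
      have : ∀ s : ℝ, ∑ i, ξ i * (x + s • (Pi.single j 1 : Fin n → ℝ)) i
          = ∑ i, ξ i * x i + ξ j * s := by
        intro s
        simp [mul_add, Finset.sum_add_distrib, Pi.single_apply]
      simp_rw [this]
      simpa using ((hasDerivAt_id (0 : ℝ)).const_mul (ξ j)).const_add (∑ i, ξ i * x i)
    have h2 := ((h1.ofReal_comp).const_mul (-Complex.I)).cexp
    refine HasDerivAt.congr_deriv h2 ?_
    simp [pker]; ring
  · intro x _
    have h1 : HasDerivAt (fun s : ℝ => ((t, Fin.cons y (x + s • (Pi.single j 1 : Fin n → ℝ))) :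
        ℝ × (Fin (n + 1) → ℝ))) (0, Pi.single j.succ 1) 0 := by
      refine (hasDerivAt_const _ t).prodMk (hasDerivAt_pi.2 fun i => ?_)
      refine Fin.cases ?_ (fun i => ?_) i
      · simpa using hasDerivAt_const (0 : ℝ) y
      · have : HasDerivAt (fun s : ℝ => x i + s * (Pi.single j 1 : Fin n → ℝ) i)
            ((Pi.single j 1 : Fin n → ℝ) i) 0 := by
          simpa using ((hasDerivAt_id (0 : ℝ)).mul_const
            ((Pi.single j 1 : Fin n → ℝ) i)).const_add (x i)
        have e : (Pi.single j.succ 1 : Fin (n + 1) → ℝ) i.succ = (Pi.single j 1 : Fin n → ℝ) i := by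
          simp [Pi.single_apply]
        rw [e]
        simpa using this
    have h2 := ((hw.hasF _).comp_hasDerivAt (0 : ℝ) h1).ofReal_comp
    refine HasDerivAt.congr_deriv h2 ?_
    simp [pdx]

lemma pF_supp {n : ℕ} {w : ℝ × (Fin (n + 1) → ℝ) → ℝ} (hw : SmC w) (ξ : Fin n → ℝ) :
    ∃ R : ℝ, ∀ t y, (t, y) ∉ Set.Icc (-R) R ×ˢ Set.Icc (-R) R → pFourier w t y ξ = 0 := by
  obtain ⟨R, hR⟩ := hw.box
  refine ⟨R, fun t y h => ?_⟩
  rw [pF_eq]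
  have : ∀ x, (w (t, Fin.cons y x) : ℂ) * pker ξ x = 0 := by
    intro x
    have : w (t, Fin.cons y x) = 0 := by
      by_contra h'
      obtain ⟨h1, h2, -⟩ := hR t y x h'
      exact h ⟨abs_le.1 h1, abs_le.1 h2⟩
    simp [this]
  simp [this]

lemma pF_memLp {n : ℕ} {w : ℝ × (Fin (n + 1) → ℝ) → ℝ} (hw : SmC w) (ξ : Fin n → ℝ)
    {c : ℝ × ℝ → ℂ} (hc : Continuous c) :
    MemLp (fun q : ℝ × ℝ => c q * pFourier w q.1 q.2 ξ) 2 := by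
  obtain ⟨R, hR⟩ := pF_supp hw ξ
  refine (hc.mul (pF_cont hw ξ)).memLp_of_hasCompactSupport ?_
  refine HasCompactSupport.intro (isCompact_Icc.prod isCompact_Icc) (K := Set.Icc (-R) R ×ˢ Set.Icc (-R) R) ?_
  intro q hq
  simp [hR q.1 q.2 hq]

lemma pF_sym {n : ℕ} {w : ℝ × (Fin (n + 1) → ℝ) → ℝ} (hw : SmC w) (ξ : Fin n → ℝ) (t y : ℝ)
    (j : Fin n) :
    pFourier (pdx 0 (pdx j.succ w)) t y ξ = Complex.I * ξ j * pFourier (pdx 0 w) t y ξ := by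
  have h1 := pF_dy (hw.pdx j.succ) ξ t y
  have h2 := (pF_dy hw ξ t y).const_mul (Complex.I * ξ j)
  have e : (fun s => pFourier (pdx j.succ w) t s ξ)
      = fun s => Complex.I * ξ j * pFourier w t s ξ := by
    funext s; exact pF_dx hw ξ t s j
  rw [e] at h1
  exact h1.unique h2

lemma pF_lin {n : ℕ} {u : ℝ × (Fin (n + 1) → ℝ) → ℝ} (hu : SmC u) (ξ : Fin n → ℝ) (t y lam : ℝ)
    (a : ℝ × ℝ → Fin (n + 1) → Fin (n + 1) → ℝ) :
    pFourier (fun p => pdt u p + (∑ j, ∑ k, a (p.1, p.2 0) j k * pdxx j k u p) - lam * u p) t y ξ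
      = pFourier (pdt u) t y ξ + (∑ j, ∑ k, (a (t, y) j k : ℂ) * pFourier (pdxx j k u) t y ξ)
        - lam * pFourier u t y ξ := by
  have hI : ∀ j k, Integrable (fun x => (a (t, y) j k : ℂ) *
      ((pdxx j k u (t, Fin.cons y x) : ℂ) * pker ξ x)) := fun j k =>
    (pF_int ((hu.pdx k).pdx j) t y ξ).const_mul _
  have hI2 : ∀ j, Integrable (fun x => ∑ k, (a (t, y) j k : ℂ) *
      ((pdxx j k u (t, Fin.cons y x) : ℂ) * pker ξ x)) := fun j =>
    integrable_finsetSum _ fun k _ => hI j k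
  have hI3 : Integrable (fun x => ∑ j, ∑ k, (a (t, y) j k : ℂ) *
      ((pdxx j k u (t, Fin.cons y x) : ℂ) * pker ξ x)) :=
    integrable_finsetSum _ fun j _ => hI2 j
  have hI4 : Integrable (fun x => (pdt u (t, Fin.cons y x) : ℂ) * pker ξ x +
      ∑ j, ∑ k, (a (t, y) j k : ℂ) * ((pdxx j k u (t, Fin.cons y x) : ℂ) * pker ξ x)) :=
    (pF_int hu.pdt t y ξ).add hI3
  simp only [pF_eq]
  simp_rw [← integral_const_mul]
  rw [Finset.sum_congr rfl fun j _ => (integral_finsetSum Finset.univ fun k _ => hI j k).symm,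
    ← integral_finsetSum Finset.univ fun j _ => hI2 j,
    ← integral_add (pF_int hu.pdt t y ξ) hI3,
    ← integral_sub hI4 ((pF_int hu t y ξ).const_mul _)]
  congr 1; funext x
  simp only [Fin.cons_zero]
  push_cast
  simp only [add_mul, sub_mul, Finset.sum_mul, mul_assoc]

lemma pF_exp {n : ℕ} {u : ℝ × (Fin (n + 1) → ℝ) → ℝ} (hu : SmC u) (ξ : Fin n → ℝ) (t y lam : ℝ)
    (a : ℝ × ℝ → Fin (n + 1) → Fin (n + 1) → ℝ) (hs : ∀ q j k, a q j k = a q k j) :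
    pFourier (fun p => pdt u p + (∑ j, ∑ k, a (p.1, p.2 0) j k * pdxx j k u p) - lam * u p) t y ξ
      = pFourier (pdt u) t y ξ + a (t, y) 0 0 * pFourier (pdx 0 (pdx 0 u)) t y ξ
        + 2 * Complex.I * ((∑ k : Fin n, a (t, y) 0 k.succ * ξ k : ℝ) : ℂ) * pFourier (pdx 0 u) t y ξ
        - (((∑ j : Fin n, ∑ k : Fin n, a (t, y) j.succ k.succ * ξ j * ξ k) + lam : ℝ) : ℂ)
          * pFourier u t y ξ := by
  rw [pF_lin hu]
  have e1 : ∀ k : Fin n, pFourier (pdxx 0 k.succ u) t y ξ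
    = Complex.I * ξ k * pFourier (pdx 0 u) t y ξ := fun k => pF_sym hu ξ t y k
  have e2 : ∀ k : Fin n, pFourier (pdxx k.succ 0 u) t y ξ
    = Complex.I * ξ k * pFourier (pdx 0 u) t y ξ := fun k => pF_dx (hu.pdx 0) ξ t y k
  have e3 : ∀ j k : Fin n, pFourier (pdxx j.succ k.succ u) t y ξ
    = - (ξ j * ξ k * pFourier u t y ξ) := fun j k => by
      rw [pdxx, pF_dx (hu.pdx k.succ), pF_dx hu]
      linear_combination ((ξ j : ℂ) * ξ k * pFourier u t y ξ) * Complex.I_sq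
  have e0 : pFourier (pdxx 0 0 u) t y ξ = pFourier (pdx 0 (pdx 0 u)) t y ξ := rfl
  have e4 : ∀ k : Fin n, a (t, y) k.succ 0 = a (t, y) 0 k.succ := fun k => hs _ _ _
  simp only [Fin.sum_univ_succ, Finset.sum_add_distrib, e0, e1, e2, e3, e4]
  set V := pFourier u t y ξ
  set W := pFourier (pdx 0 u) t y ξ
  have s1 : ∑ k : Fin n, (a (t, y) 0 k.succ : ℂ) * (Complex.I * ξ k * W)
      = Complex.I * ((∑ k : Fin n, a (t, y) 0 k.succ * ξ k : ℝ) : ℂ) * W := by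
    push_cast
    rw [Finset.mul_sum, Finset.sum_mul]
    refine Finset.sum_congr rfl fun k _ => by ring
  have s2 : ∑ j : Fin n, ∑ k : Fin n, (a (t, y) j.succ k.succ : ℂ) * -(ξ j * ξ k * V)
      = - (((∑ j : Fin n, ∑ k : Fin n, a (t, y) j.succ k.succ * ξ j * ξ k) : ℝ) : ℂ) * V := by
    push_cast
    rw [neg_mul, Finset.sum_mul, ← Finset.sum_neg_distrib]
    refine Finset.sum_congr rfl fun j _ => ?_
    rw [Finset.sum_mul, ← Finset.sum_neg_distrib]
    refine Finset.sum_congr rfl fun k _ => by ring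
  rw [s1, s2]
  push_cast
  ring

lemma quad_cons {n : ℕ} (A : Fin (n + 1) → Fin (n + 1) → ℝ) (hs : ∀ j k, A j k = A k j)
    (s : ℝ) (ξ : Fin n → ℝ) :
    ∑ j, ∑ k, A j k * (Fin.cons s ξ : Fin (n + 1) → ℝ) j * (Fin.cons s ξ : Fin (n + 1) → ℝ) k
      = A 0 0 * s ^ 2 + 2 * s * (∑ k : Fin n, A 0 k.succ * ξ k)
        + ∑ j : Fin n, ∑ k : Fin n, A j.succ k.succ * ξ j * ξ k := by
  have e4 : ∀ k : Fin n, A k.succ 0 = A 0 k.succ := fun k => hs _ _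
  simp only [Fin.sum_univ_succ, Finset.sum_add_distrib, Fin.cons_zero, Fin.cons_succ, e4]
  have s1 : ∑ k : Fin n, A 0 k.succ * s * ξ k = s * ∑ k : Fin n, A 0 k.succ * ξ k := by
    rw [Finset.mul_sum]; exact Finset.sum_congr rfl fun k _ => by ring
  have s2 : ∑ k : Fin n, A 0 k.succ * ξ k * s = s * ∑ k : Fin n, A 0 k.succ * ξ k := by
    rw [Finset.mul_sum]; exact Finset.sum_congr rfl fun k _ => by ring
  rw [s1, s2]; ring

lemma sq_cons {n : ℕ} (s : ℝ) (ξ : Fin n → ℝ) :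
    ∑ j, ((Fin.cons s ξ : Fin (n + 1) → ℝ) j) ^ 2 = s ^ 2 + ∑ j, ξ j ^ 2 := by
  simp [Fin.sum_univ_succ]

theorem stmt4 (n : ℕ) (hn : 1 ≤ n) (δ : ℝ) (hδ : δ ∈ Set.Ioo (0 : ℝ) 1) :
    ∃ N : ℝ, 0 < N ∧
      ∀ a : ℝ × ℝ → Fin (n + 1) → Fin (n + 1) → ℝ,
        (∀ j k, ContDiff ℝ (⊤ : ℕ∞) fun q => a q j k) →
        (∀ q j k, a q j k = a q k j) →
        (∀ (q : ℝ × ℝ) (θ : Fin (n + 1) → ℝ),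
          δ * ∑ j, (θ j) ^ 2 ≤ ∑ j, ∑ k, a q j k * θ j * θ k ∧
          ∑ j, ∑ k, a q j k * θ j * θ k ≤ δ⁻¹ * ∑ j, (θ j) ^ 2) →
        ∀ u : ℝ × (Fin (n + 1) → ℝ) → ℝ, ContDiff ℝ (⊤ : ℕ∞) u → HasCompactSupport u →
          ∀ lam : ℝ, 0 ≤ lam →
            ∀ ξ : Fin n → ℝ, 0 < (∑ j, (ξ j) ^ 2) + lam →
              ((∑ j, (ξ j) ^ 2) + lam) *
                  Real.sqrt (∫ q : ℝ × ℝ, ‖pFourier u q.1 q.2 ξ‖ ^ 2)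
                ≤ N * Real.sqrt (∫ q : ℝ × ℝ,
                    ‖pFourier (fun p =>
                        pdt u p + (∑ j, ∑ k, a (p.1, p.2 0) j k * pdxx j k u p)
                          - lam * u p) q.1 q.2 ξ‖ ^ 2) := by
  obtain ⟨hδ0, hδ1⟩ := hδ
  refine ⟨(3 / δ ^ 2 + 1) / δ, by positivity, ?_⟩
  intro a hac hs hell u hu1 hu2 lam hlam ξ hκ
  have hu : SmC u := ⟨hu1, hu2⟩
  have hacont : ∀ j k, Continuous fun q => a q j k := fun j k => (hac j k).continuous
  have hS : 0 ≤ ∑ j, (ξ j) ^ 2 := Finset.sum_nonneg fun j _ => sq_nonneg _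
  set S := ∑ j, (ξ j) ^ 2 with hSd
  let b : ℝ × ℝ → ℝ := fun q => ∑ k : Fin n, a q 0 k.succ * ξ k
  let c0 : ℝ × ℝ → ℝ := fun q => ∑ j : Fin n, ∑ k : Fin n, a q j.succ k.succ * ξ j * ξ k
  have hell' : ∀ q s (η : Fin n → ℝ), δ * (s ^ 2 + ∑ j, η j ^ 2) ≤ a q 0 0 * s ^ 2
      + 2 * s * (∑ k : Fin n, a q 0 k.succ * η k)
        + ∑ j : Fin n, ∑ k : Fin n, a q j.succ k.succ * η j * η k ∧
      a q 0 0 * s ^ 2 + 2 * s * (∑ k : Fin n, a q 0 k.succ * η k)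
        + ∑ j : Fin n, ∑ k : Fin n, a q j.succ k.succ * η j * η k
        ≤ δ⁻¹ * (s ^ 2 + ∑ j, η j ^ 2) := by
    intro q s η
    have := hell q (Fin.cons s η)
    rwa [quad_cons (a q) (hs q), sq_cons] at this
  have ha1 : ∀ q, δ ≤ a q 0 0 := by
    intro q; simpa using (hell' q 1 0).1
  have ha2 : ∀ q, a q 0 0 ≤ δ⁻¹ := by
    intro q; simpa using (hell' q 1 0).2
  have hapos : ∀ q, 0 < a q 0 0 := fun q => hδ0.trans_le (ha1 q)
  have hc0 : ∀ q, 0 ≤ c0 q ∧ c0 q ≤ δ⁻¹ * S := by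
    intro q
    have h := hell' q 0 ξ
    have e : c0 q = ∑ j : Fin n, ∑ k : Fin n, a q j.succ k.succ * ξ j * ξ k := rfl
    rw [← e, ← hSd] at h
    have h1 : 0 ≤ δ * S := by positivity
    constructor
    · linarith [h.1]
    · linarith [h.2]
  have hμ0 : ∀ q, δ * S ≤ c0 q - a q 0 0 * (b q / a q 0 0) ^ 2 := by
    intro q
    have h := (hell' q (-(b q / a q 0 0)) ξ).1
    have e : c0 q = ∑ j : Fin n, ∑ k : Fin n, a q j.succ k.succ * ξ j * ξ k := rfl
    have e' : b q = ∑ k : Fin n, a q 0 k.succ * ξ k := rfl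
    rw [← e, ← e', ← hSd] at h
    have e2 : b q = a q 0 0 * (b q / a q 0 0) := by
      have := hapos q; field_simp
    have e3 : 0 ≤ δ * (-(b q / a q 0 0)) ^ 2 := by positivity
    generalize b q / a q 0 0 = z at *
    rw [e2] at h
    nlinarith
  set C := δ⁻¹ * S + lam with hC
  have hC0 : 0 ≤ C := by positivity
  obtain ⟨R, hR⟩ := pF_supp hu ξ
  obtain ⟨K0, hK0⟩ := pF_bdd hu ξ
  obtain ⟨K1, hK1⟩ := pF_bdd hu.pdt ξ
  obtain ⟨K2, hK2⟩ := pF_bdd hu.pdt.pdt ξ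
  obtain ⟨K3, hK3⟩ := pF_bdd (hu.pdx 0) ξ
  obtain ⟨K4, hK4⟩ := pF_bdd ((hu.pdx 0).pdx 0) ξ
  obtain ⟨K5, hK5⟩ := pF_bdd (((hu.pdx 0).pdx 0).pdx 0) ξ
  obtain ⟨K6, hK6⟩ := pF_bdd (hu.pdx 0).pdt ξ
  obtain ⟨K7, hK7⟩ := pF_bdd ((hu.pdx 0).pdx 0).pdt ξ
  let K := |K0| + |K1| + |K2| + |K3| + |K4| + |K5| + |K6| + |K7|
  have n0 := abs_nonneg K0
  have n1 := abs_nonneg K1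
  have n2 := abs_nonneg K2
  have n3 := abs_nonneg K3
  have n4 := abs_nonneg K4
  have n5 := abs_nonneg K5
  have n6 := abs_nonneg K6
  have n7 := abs_nonneg K7
  have hK : K = |K0| + |K1| + |K2| + |K3| + |K4| + |K5| + |K6| + |K7| := rfl
  have hbc : Continuous b := by
    refine continuous_finsetSum _ fun k _ => (hacont _ _).mul continuous_const
  have hcc : Continuous c0 := by
    refine continuous_finsetSum _ fun k _ => continuous_finsetSum _ fun j _ =>
      ((hacont _ _).mul continuous_const).mul continuous_const
  have hfe : ∀ q : ℝ × ℝ, pFourier (fun p =>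
      pdt u p + (∑ j, ∑ k, a (p.1, p.2 0) j k * pdxx j k u p) - lam * u p) q.1 q.2 ξ
      = pFourier (pdt u) q.1 q.2 ξ + a q 0 0 * pFourier (pdx 0 (pdx 0 u)) q.1 q.2 ξ
        + 2 * Complex.I * ((b q : ℝ) : ℂ) * pFourier (pdx 0 u) q.1 q.2 ξ
        - ((c0 q + lam : ℝ) : ℂ) * pFourier u q.1 q.2 ξ := fun q => pF_exp hu ξ q.1 q.2 lam a hs
  refine core_aux (K := K) (δ := δ) (κ := S + lam) (B := C / δ + 1) (C := C) (R := R)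
    (v := fun t y => pFourier u t y ξ) (vt := fun t y => pFourier (pdt u) t y ξ)
    (vtt := fun t y => pFourier (pdt (pdt u)) t y ξ)
    (vy := fun t y => pFourier (pdx 0 u) t y ξ)
    (vyt := fun t y => pFourier (pdt (pdx 0 u)) t y ξ)
    (vyy := fun t y => pFourier (pdx 0 (pdx 0 u)) t y ξ)
    (vyyt := fun t y => pFourier (pdt (pdx 0 (pdx 0 u))) t y ξ)
    (vyyy := fun t y => pFourier (pdx 0 (pdx 0 (pdx 0 u))) t y ξ)
    (a := fun q => a q 0 0) (β := fun q => b q / a q 0 0) (c := fun q => c0 q + lam)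
    (f := fun q => pFourier (fun p =>
      pdt u p + (∑ j, ∑ k, a (p.1, p.2 0) j k * pdxx j k u p) - lam * u p) q.1 q.2 ξ)
    (d1 := fun t y => pF_dt hu ξ t y)
    (d2 := fun t y => pF_dt hu.pdt ξ t y)
    (d3 := fun t y => pF_dy hu ξ t y)
    (d4 := fun t y => pF_dy (hu.pdx 0) ξ t y)
    (d5 := fun t y => pF_dy ((hu.pdx 0).pdx 0) ξ t y)
    (d6 := fun t y => pF_dt (hu.pdx 0) ξ t y)
    (d7 := fun t y => pF_dt ((hu.pdx 0).pdx 0) ξ t y)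
    (k0 := fun t y => (hK0 t y).trans (by linarith [le_abs_self K0]))
    (k1 := fun t y => (hK1 t y).trans (by linarith [le_abs_self K1]))
    (k2 := fun t y => (hK2 t y).trans (by linarith [le_abs_self K2]))
    (k3 := fun t y => (hK3 t y).trans (by linarith [le_abs_self K3]))
    (k4 := fun t y => (hK4 t y).trans (by linarith [le_abs_self K4]))
    (k5 := fun t y => (hK5 t y).trans (by linarith [le_abs_self K5]))
    (k6 := fun t y => (hK6 t y).trans (by linarith [le_abs_self K6]))
    (k7 := fun t y => (hK7 t y).trans (by linarith [le_abs_self K7]))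
    (hδ := hδ0) (hδ1 := hδ1) (hκ := hκ.le) (ham := (hacont 0 0).measurable)
    (ha1 := ha1) (ha2 := ha2) (hβ := ?_) (hcC := ?_) (hμ := ?_) (hf := ?_) (hfL := ?_)
    (hsupp := hR)
  · intro q
    have h1 := hμ0 q
    have h2 := (hc0 q).2
    have h3 := ha1 q
    have h4 : 0 ≤ δ * S := by positivity
    show |b q / a q 0 0| ≤ _
    have h5 : δ * |b q / a q 0 0| ^ 2 ≤ C := by
      rw [sq_abs]
      nlinarith [sq_nonneg (b q / a q 0 0)]
    have h6 : |b q / a q 0 0| ^ 2 ≤ C / δ := by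
      rw [le_div_iff₀ hδ0]; linarith
    nlinarith [sq_nonneg (|b q / a q 0 0| - 1), abs_nonneg (b q / a q 0 0)]
  · intro q
    have h2 := hc0 q
    show |c0 q + lam| ≤ _
    rw [abs_of_nonneg (by linarith [h2.1])]
    linarith [h2.2]
  · intro q
    have := hμ0 q
    show δ * (S + lam) ≤ c0 q + lam - a q 0 0 * (b q / a q 0 0) ^ 2
    nlinarith
  · intro q
    have e2 : a q 0 0 * (b q / a q 0 0) = b q := by
      have := hapos q; field_simp
    show _ = pFourier (pdt u) q.1 q.2 ξ + a q 0 0 * pFourier (pdx 0 (pdx 0 u)) q.1 q.2 ξ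
        + 2 * Complex.I * ((a q 0 0 * (b q / a q 0 0) : ℝ) : ℂ) * pFourier (pdx 0 u) q.1 q.2 ξ
        - ((c0 q + lam : ℝ) : ℂ) * pFourier u q.1 q.2 ξ
    rw [e2]
    exact hfe q
  · refine MemLp.norm ?_
    simp_rw [hfe]
    refine MemLp.sub (MemLp.add (MemLp.add ?_ ?_) ?_) ?_
    · simpa using pF_memLp hu.pdt ξ (c := fun _ => 1) continuous_const
    · exact pF_memLp ((hu.pdx 0).pdx 0) ξ (c := fun q => (a q 0 0 : ℂ))
        (Complex.continuous_ofReal.comp (hacont 0 0))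
    · exact pF_memLp (hu.pdx 0) ξ (c := fun q => 2 * Complex.I * ((b q : ℝ) : ℂ))
        (continuous_const.mul (Complex.continuous_ofReal.comp hbc))
    · exact pF_memLp hu ξ (c := fun q => ((c0 q + lam : ℝ) : ℂ))
        (Complex.continuous_ofReal.comp (hcc.add continuous_const))
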